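/- Let f : {0,1}ⁿ → ℝ be nonnegative and not identically zero, let ε ∈ [0,1/2] and λ = (1−2ε)². Then Ent(T_ε f) ≤ (1/𝔼f)·(1/(2 ln 2))·(Σ_{k=1}^n f̂({k})²)·λ + C·(𝔼f²/𝔼f)·λ^{4/3} + C·(𝔼²f²/𝔼³f)·λ² for some absolute constant C > 0, where Ent(g) = 𝔼[g log₂ g] − 𝔼g·log₂ 𝔼g and f̂(S) are the Walsh–Fourier coefficients of f. -/

import Mathlib

open Finset

noncomputable def expec (n : ℕ) (f : (Fin n → Bool) → ℝ) : ℝ :=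
  (∑ x : Fin n → Bool, f x) / 2 ^ n

noncomputable def walsh (n : ℕ) (S : Finset (Fin n)) (x : Fin n → Bool) : ℝ :=
  ∏ i ∈ S, (if x i then (-1 : ℝ) else 1)

noncomputable def fcoef (n : ℕ) (f : (Fin n → Bool) → ℝ) (S : Finset (Fin n)) : ℝ :=
  expec n (fun x => f x * walsh n S x)

def comp (n : ℕ) (x : Fin n → Bool) : Fin n → Bool := fun i => !(x i)

noncomputable def evenPart (n : ℕ) (f : (Fin n → Bool) → ℝ) (x : Fin n → Bool) : ℝ :=
  (f x + f (comp n x)) / 2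

noncomputable def oddPart (n : ℕ) (f : (Fin n → Bool) → ℝ) (x : Fin n → Bool) : ℝ :=
  f x - evenPart n f x

noncomputable def noiseK (n : ℕ) (ε : ℝ) (x y : Fin n → Bool) : ℝ :=
  ∏ i : Fin n, (if x i = y i then 1 - ε else ε)

noncomputable def noiseOp (n : ℕ) (ε : ℝ) (f : (Fin n → Bool) → ℝ) (x : Fin n → Bool) : ℝ :=
  ∑ y : Fin n → Bool, noiseK n ε x y * f y

noncomputable def entro (n : ℕ) (g : (Fin n → Bool) → ℝ) : ℝ :=
  expec n (fun x => g x * Real.logb 2 (g x)) - expec n g * Real.logb 2 (expec n g)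

noncomputable def varia (n : ℕ) (g : (Fin n → Bool) → ℝ) : ℝ :=
  expec n (fun x => g x ^ 2) - (expec n g) ^ 2

section WalshBasics

variable {n : ℕ}

theorem expec_add (f g : (Fin n → Bool) → ℝ) :
    expec n (fun x => f x + g x) = expec n f + expec n g := by
  simp only [expec, Finset.sum_add_distrib, add_div]

theorem expec_const_mul (c : ℝ) (f : (Fin n → Bool) → ℝ) :
    expec n (fun x => c * f x) = c * expec n f := by
  simp only [expec, ← Finset.mul_sum, mul_div_assoc]

theorem expec_const (c : ℝ) : expec n (fun _ => c) = c := by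
  simp [expec]

theorem expec_sum {ι : Type*} (s : Finset ι) (f : ι → (Fin n → Bool) → ℝ) :
    expec n (fun x => ∑ i ∈ s, f i x) = ∑ i ∈ s, expec n (f i) := by
  simp only [expec]
  rw [Finset.sum_comm, Finset.sum_div]

theorem expec_mono {f g : (Fin n → Bool) → ℝ} (h : ∀ x, f x ≤ g x) :
    expec n f ≤ expec n g := by
  unfold expec
  gcongr with x
  exact h x

theorem expec_nonneg {f : (Fin n → Bool) → ℝ} (h : ∀ x, 0 ≤ f x) : 0 ≤ expec n f :=
  div_nonneg (Finset.sum_nonneg fun x _ => h x) (by positivity)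

theorem expec_comp_involutive {σ : (Fin n → Bool) → (Fin n → Bool)}
    (hσ : Function.Involutive σ) (f : (Fin n → Bool) → ℝ) :
    expec n (fun x => f (σ x)) = expec n f := by
  unfold expec
  congr 1
  exact Equiv.sum_comp (hσ.toPerm σ) f

theorem walsh_mul_self (S : Finset (Fin n)) (x : Fin n → Bool) :
    walsh n S x * walsh n S x = 1 := by
  unfold walsh
  rw [← Finset.prod_mul_distrib]
  exact Finset.prod_eq_one fun i _ => by split_ifs <;> norm_num

theorem walsh_comp (S : Finset (Fin n)) (x : Fin n → Bool) :
    walsh n S (comp n x) = (-1) ^ S.card * walsh n S x := by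
  unfold walsh comp
  rw [← Finset.prod_const, ← Finset.prod_mul_distrib]
  refine Finset.prod_congr rfl fun i _ => ?_
  cases x i <;> simp

theorem walsh_insert {a : Fin n} {S : Finset (Fin n)} (ha : a ∉ S) (x : Fin n → Bool) :
    walsh n (insert a S) x = walsh n {a} x * walsh n S x := by
  simp [walsh, Finset.prod_insert ha]

/-- The involution of the cube that negates coordinate `a`. -/
def flipAt (a : Fin n) (x : Fin n → Bool) : Fin n → Bool :=
  Function.update x a (!(x a))

theorem flipAt_involutive (a : Fin n) : Function.Involutive (flipAt a) := by
  intro x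
  simp [flipAt]

theorem walsh_flipAt_of_notMem {a : Fin n} {S : Finset (Fin n)} (ha : a ∉ S)
    (x : Fin n → Bool) : walsh n S (flipAt a x) = walsh n S x := by
  unfold walsh flipAt
  refine Finset.prod_congr rfl fun i hi => ?_
  rw [Function.update_of_ne (ne_of_mem_of_not_mem hi ha)]

theorem walsh_singleton_flipAt (a : Fin n) (x : Fin n → Bool) :
    walsh n {a} (flipAt a x) = -walsh n {a} x := by
  cases h : x a <;> simp [walsh, flipAt, h]

theorem walsh_flipAt_of_mem {a : Fin n} {S : Finset (Fin n)} (ha : a ∈ S)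
    (x : Fin n → Bool) : walsh n S (flipAt a x) = -walsh n S x := by
  rw [← Finset.insert_erase ha, walsh_insert (Finset.notMem_erase a S),
    walsh_insert (Finset.notMem_erase a S), walsh_singleton_flipAt,
    walsh_flipAt_of_notMem (Finset.notMem_erase a S), neg_mul]

theorem expec_eq_zero_of_flipAt (a : Fin n) {f : (Fin n → Bool) → ℝ}
    (h : ∀ x, f (flipAt a x) = -f x) : expec n f = 0 := by
  have h1 := expec_comp_involutive (flipAt_involutive a) f
  have h2 : expec n (fun x => f (flipAt a x)) = -1 * expec n f := by
    rw [← expec_const_mul]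
    simp only [h, neg_one_mul]
  linarith

theorem expec_walsh_mul_walsh (S T : Finset (Fin n)) :
    expec n (fun x => walsh n S x * walsh n T x) = if S = T then 1 else 0 := by
  split_ifs with h
  · subst h
    simp only [walsh_mul_self, expec_const]
  · obtain ⟨a, ha⟩ : ∃ a, ¬(a ∈ S ↔ a ∈ T) := by
      by_contra! hc
      exact h (Finset.ext hc)
    refine expec_eq_zero_of_flipAt a fun x => ?_
    by_cases hS : a ∈ S <;> by_cases hT : a ∈ T
    · tauto
    · rw [walsh_flipAt_of_mem hS, walsh_flipAt_of_notMem hT, neg_mul]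
    · rw [walsh_flipAt_of_notMem hS, walsh_flipAt_of_mem hT, mul_neg]
    · tauto

theorem expec_sq_walsh_sum (s : Finset (Finset (Fin n))) (c : Finset (Fin n) → ℝ) :
    expec n (fun x => (∑ S ∈ s, c S * walsh n S x) ^ 2) = ∑ S ∈ s, c S ^ 2 := by
  have h : ∀ x, (∑ S ∈ s, c S * walsh n S x) ^ 2
      = ∑ S ∈ s, ∑ T ∈ s, c S * c T * (walsh n S x * walsh n T x) := by
    intro x
    rw [sq, Finset.sum_mul_sum]
    refine Finset.sum_congr rfl fun S _ => Finset.sum_congr rfl fun T _ => by ring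
  simp only [h, expec_sum, expec_const_mul, expec_walsh_mul_walsh]
  refine Finset.sum_congr rfl fun S hS => ?_
  simp [hS, sq]

/-- Bonami's lemma in its `L²`–`L⁴` form. -/
theorem expec_pow_four_walsh_sum_le (A : Finset (Fin n)) (c : Finset (Fin n) → ℝ) :
    expec n (fun x => (∑ S ∈ A.powerset, c S * walsh n S x) ^ 4)
      ≤ (∑ S ∈ A.powerset, 3 ^ S.card * c S ^ 2) ^ 2 := by
  induction A using Finset.induction_on generalizing c with
  | empty =>
    simp only [Finset.powerset_empty, Finset.sum_singleton, Finset.card_empty, pow_zero, one_mul]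
    simp only [walsh, Finset.prod_empty, mul_one, expec_const]
    exact le_of_eq (by ring)
  | insert a A ha ih =>
    have hmem : ∀ S ∈ A.powerset, a ∉ S := fun S hS h => ha (Finset.mem_powerset.1 hS h)
    set P : (Fin n → Bool) → ℝ := fun x => ∑ S ∈ A.powerset, c S * walsh n S x with hP
    set Q : (Fin n → Bool) → ℝ :=
      fun x => ∑ S ∈ A.powerset, c (insert a S) * walsh n S x with hQ
    set p := ∑ S ∈ A.powerset, 3 ^ S.card * c S ^ 2 with hp
    set q := ∑ S ∈ A.powerset, 3 ^ S.card * c (insert a S) ^ 2 with hq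
    have hPp : expec n (fun x => P x ^ 4) ≤ p ^ 2 := ih c
    have hQq : expec n (fun x => Q x ^ 4) ≤ q ^ 2 := ih fun S => c (insert a S)
    have hp0 : 0 ≤ p := Finset.sum_nonneg fun S _ => by positivity
    have hq0 : 0 ≤ q := Finset.sum_nonneg fun S _ => by positivity
    have hsplit : ∀ x, ∑ S ∈ (insert a A).powerset, c S * walsh n S x
        = P x + walsh n {a} x * Q x := by
      intro x
      rw [Finset.sum_powerset_insert ha, hP, hQ, Finset.mul_sum]
      congr 1
      refine Finset.sum_congr rfl fun S hS => ?_
      rw [walsh_insert (hmem S hS)]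
      ring
    have hweight : ∑ S ∈ (insert a A).powerset, (3 : ℝ) ^ S.card * c S ^ 2 = p + 3 * q := by
      rw [Finset.sum_powerset_insert ha, hp, hq, Finset.mul_sum]
      congr 1
      refine Finset.sum_congr rfl fun S hS => ?_
      rw [Finset.card_insert_of_notMem (hmem S hS)]
      ring
    have hPf : ∀ x, P (flipAt a x) = P x := fun x =>
      Finset.sum_congr rfl fun S hS => by rw [walsh_flipAt_of_notMem (hmem S hS)]
    have hQf : ∀ x, Q (flipAt a x) = Q x := fun x =>
      Finset.sum_congr rfl fun S hS => by rw [walsh_flipAt_of_notMem (hmem S hS)]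
    have hodd : expec n (fun x => walsh n {a} x * (4 * P x ^ 3 * Q x + 4 * P x * Q x ^ 3)) = 0 :=
      expec_eq_zero_of_flipAt a fun x => by
        rw [walsh_singleton_flipAt, hPf, hQf]
        ring
    have hexp : ∀ x, (P x + walsh n {a} x * Q x) ^ 4
        = (P x ^ 4 + (6 * (P x ^ 2 * Q x ^ 2) + Q x ^ 4))
          + walsh n {a} x * (4 * P x ^ 3 * Q x + 4 * P x * Q x ^ 3) := by
      intro x
      have hw := walsh_mul_self {a} x
      generalize walsh n {a} x = w at hw ⊢
      linear_combination (6 * P x ^ 2 * Q x ^ 2 + 4 * P x * Q x ^ 3 * w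
        + Q x ^ 4 * (w * w + 1)) * hw
    have hcs : expec n (fun x => P x ^ 2 * Q x ^ 2) ≤ p * q := by
      have hcs' := Finset.sum_mul_sq_le_sq_mul_sq Finset.univ
        (fun x => P x ^ 2) (fun x => Q x ^ 2)
      have h1 : expec n (fun x => P x ^ 2 * Q x ^ 2) ^ 2
          ≤ expec n (fun x => P x ^ 4) * expec n (fun x => Q x ^ 4) := by
        unfold expec
        rw [div_pow, div_mul_div_comm, ← sq]
        gcongr
        simpa only [← pow_mul] using hcs'
      refine abs_le_of_sq_le_sq' ?_ (by positivity) |>.2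
      calc _ ≤ _ := h1
        _ ≤ p ^ 2 * q ^ 2 := by
          gcongr
          exact expec_nonneg fun x => by positivity
        _ = (p * q) ^ 2 := by ring
    simp only [hsplit, hweight, hexp]
    rw [expec_add, hodd, expec_add, expec_add, expec_const_mul]
    nlinarith [mul_nonneg hp0 hq0]

theorem noiseK_eq_walsh_sum (ε : ℝ) (x y : Fin n → Bool) :
    noiseK n ε x y
      = (∑ S : Finset (Fin n), (1 - 2 * ε) ^ S.card * (walsh n S x * walsh n S y)) / 2 ^ n := by
  have h : ∀ S : Finset (Fin n), (1 - 2 * ε) ^ S.card * (walsh n S x * walsh n S y)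
      = ∏ i ∈ S, ((1 - 2 * ε) * ((if x i then -1 else 1) * (if y i then -1 else 1))) := by
    intro S
    rw [Finset.prod_mul_distrib, Finset.prod_const, Finset.prod_mul_distrib]
    rfl
  simp only [h]
  rw [← Finset.powerset_univ, ← Finset.prod_one_add, noiseK]
  have h2 : (2 : ℝ) ^ n = ∏ _i : Fin n, 2 := by simp
  rw [h2, ← Finset.prod_div_distrib]
  refine Finset.prod_congr rfl fun i _ => ?_
  cases x i <;> cases y i <;> simp <;> ring

theorem noiseOp_eq_walsh_sum (ε : ℝ) (f : (Fin n → Bool) → ℝ) (x : Fin n → Bool) :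
    noiseOp n ε f x
      = ∑ S : Finset (Fin n), (1 - 2 * ε) ^ S.card * fcoef n f S * walsh n S x := by
  simp only [noiseOp, noiseK_eq_walsh_sum, fcoef, expec, Finset.sum_div, Finset.sum_mul,
    Finset.mul_sum]
  rw [Finset.sum_comm]
  refine Finset.sum_congr rfl fun S _ => Finset.sum_congr rfl fun y _ => by ring

theorem noiseOp_zero (f : (Fin n → Bool) → ℝ) (x : Fin n → Bool) : noiseOp n 0 f x = f x := by
  have h : ∀ y, noiseK n 0 x y = if x = y then 1 else 0 := by
    intro y
    simp only [noiseK, sub_zero, Finset.prod_ite_zero, Finset.mem_univ, true_imp_iff,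
      Finset.prod_const_one, funext_iff]
  simp [noiseOp, h]

theorem sum_fcoef_sq (f : (Fin n → Bool) → ℝ) :
    ∑ S : Finset (Fin n), fcoef n f S ^ 2 = expec n (fun x => f x ^ 2) := by
  rw [← expec_sq_walsh_sum]
  congr 1
  funext x
  rw [← noiseOp_zero f x, noiseOp_eq_walsh_sum]
  simp

theorem fcoef_empty (f : (Fin n → Bool) → ℝ) : fcoef n f ∅ = expec n f := by
  simp [fcoef, walsh]

theorem noiseOp_nonneg {ε : ℝ} (h0 : 0 ≤ ε) (h1 : ε ≤ 1 / 2) {f : (Fin n → Bool) → ℝ}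
    (hf : ∀ x, 0 ≤ f x) (x : Fin n → Bool) : 0 ≤ noiseOp n ε f x := by
  refine Finset.sum_nonneg fun y _ => mul_nonneg (Finset.prod_nonneg fun i _ => ?_) (hf y)
  split_ifs <;> linarith

theorem noiseOp_const_mul (ε c : ℝ) (f : (Fin n → Bool) → ℝ) :
    noiseOp n ε (fun x => c * f x) = fun x => c * noiseOp n ε f x := by
  funext x
  simp only [noiseOp, Finset.mul_sum]
  exact Finset.sum_congr rfl fun y _ => by ring

theorem fcoef_const_mul (c : ℝ) (f : (Fin n → Bool) → ℝ) (S : Finset (Fin n)) :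
    fcoef n (fun x => c * f x) S = c * fcoef n f S := by
  simp only [fcoef, mul_assoc, expec_const_mul]

theorem expec_mul_logb_const_mul {c : ℝ} (hc : c ≠ 0) (g : (Fin n → Bool) → ℝ) :
    expec n (fun x => c * g x * Real.logb 2 (c * g x))
      = c * Real.logb 2 c * expec n g + c * expec n (fun x => g x * Real.logb 2 (g x)) := by
  rw [← expec_const_mul, ← expec_const_mul, ← expec_add]
  congr 1
  funext x
  by_cases hx : g x = 0
  · simp [hx]
  · rw [Real.logb_mul hc hx]
    ring

theorem entro_const_mul {c : ℝ} (hc : c ≠ 0) (g : (Fin n → Bool) → ℝ) :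
    entro n (fun x => c * g x) = c * entro n g := by
  unfold entro
  rw [expec_mul_logb_const_mul hc, expec_const_mul]
  by_cases h : expec n g = 0
  · simp [h]
  · rw [Real.logb_mul hc h]
    ring

end WalshBasics

theorem log_le_cubic {u : ℝ} (hu : 0 < u) :
    Real.log u ≤ u ^ 3 / 3 - 3 * u ^ 2 / 2 + 3 * u - 11 / 6 := by
  set φ : ℝ → ℝ := fun u => u ^ 3 / 3 - 3 * u ^ 2 / 2 + 3 * u - Real.log u with hφ
  have hd : ∀ v : ℝ, 0 < v → HasDerivAt φ ((v - 1) ^ 3 / v) v := by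
    intro v hv
    have h := ((((hasDerivAt_pow 3 v).div_const 3).sub
      (((hasDerivAt_pow 2 v).const_mul 3).div_const 2)).add
        ((hasDerivAt_id v).const_mul 3)).sub (Real.hasDerivAt_log hv.ne')
    refine h.congr_deriv ?_
    push_cast
    field_simp
    ring
  suffices h : φ 1 ≤ φ u by
    simp only [hφ, Real.log_one] at h
    linarith
  rcases le_total u 1 with h1 | h1
  · have hanti : AntitoneOn φ (Set.Icc u 1) := by
      refine antitoneOn_of_deriv_nonpos (convex_Icc u 1)
        (fun v hv => (hd v (by linarith [hv.1])).continuousAt.continuousWithinAt) ?_ ?_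
      · intro v hv
        rw [interior_Icc] at hv
        exact (hd v (by linarith [hv.1])).differentiableAt.differentiableWithinAt
      · intro v hv
        rw [interior_Icc] at hv
        rw [(hd v (by linarith [hv.1])).deriv]
        refine div_nonpos_of_nonpos_of_nonneg ?_ (by linarith [hv.1])
        exact Odd.pow_nonpos (by decide) (by linarith [hv.2])
    exact hanti ⟨le_rfl, h1⟩ ⟨h1, le_rfl⟩ h1
  · have hmono : MonotoneOn φ (Set.Icc 1 u) := by
      refine monotoneOn_of_deriv_nonneg (convex_Icc 1 u)
        (fun v hv => (hd v (by linarith [hv.1])).continuousAt.continuousWithinAt) ?_ ?_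
      · intro v hv
        rw [interior_Icc] at hv
        exact (hd v (by linarith [hv.1])).differentiableAt.differentiableWithinAt
      · intro v hv
        rw [interior_Icc] at hv
        rw [(hd v (by linarith [hv.1])).deriv]
        exact div_nonneg (pow_nonneg (by linarith [hv.1]) 3) (by linarith [hv.1])
    exact hmono ⟨le_rfl, h1⟩ ⟨h1, le_rfl⟩ h1

theorem one_add_mul_log_le {t : ℝ} (ht : 0 ≤ 1 + t) :
    (1 + t) * Real.log (1 + t) ≤ t + t ^ 2 / 2 - t ^ 3 / 6 + t ^ 4 / 3 := by
  rcases ht.eq_or_lt with h | h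
  · rw [← h, zero_mul]
    obtain rfl : t = -1 := by linarith
    norm_num
  · refine (mul_le_mul_of_nonneg_left (log_le_cubic h) h.le).trans (le_of_eq ?_)
    ring

theorem one_add_mul_log_le_crude {t : ℝ} (ht : 0 ≤ 1 + t) :
    (1 + t) * Real.log (1 + t) ≤ t + t ^ 2 := by
  rcases ht.eq_or_lt with h | h
  · rw [← h, zero_mul]
    obtain rfl : t = -1 := by linarith
    norm_num
  · refine (mul_le_mul_of_nonneg_left (Real.log_le_sub_one_of_pos h) h.le).trans (le_of_eq ?_)
    ring

/-- The cubic terms at antipodal points cancel up to the square of the even part. -/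
theorem neg_cube_add_cube_le (s t : ℝ) :
    -(s ^ 3 + t ^ 3) / 6 ≤ ((s + t) / 2) ^ 2 / 6 + 3 / 4 * (s ^ 4 + t ^ 4) := by
  obtain ⟨a, b, rfl, rfl⟩ : ∃ a b : ℝ, s = b + a ∧ t = b - a :=
    ⟨(s - t) / 2, (s + t) / 2, by ring, by ring⟩
  nlinarith [sq_nonneg (b + (b ^ 2 + 3 * a ^ 2)), sq_nonneg (a * b), sq_nonneg (b ^ 2),
    sq_nonneg (a ^ 2)]

section Main

variable {n : ℕ}

theorem comp_involutive : Function.Involutive (comp n) := by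
  intro x
  funext i
  simp [comp]

theorem expec_one_add_mul_log_le {t : (Fin n → Bool) → ℝ} (ht : ∀ x, 0 ≤ 1 + t x)
    (h0 : expec n t = 0) :
    expec n (fun x => (1 + t x) * Real.log (1 + t x))
      ≤ 1 / 2 * expec n (fun x => t x ^ 2) + 1 / 12 * expec n (fun x => evenPart n t x ^ 2)
        + 13 / 12 * expec n (fun x => t x ^ 4) := by
  have hcube : -expec n (fun x => t x ^ 3) / 6
      ≤ 1 / 12 * expec n (fun x => evenPart n t x ^ 2)
        + 3 / 4 * expec n (fun x => t x ^ 4) := by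
    have h := expec_mono (n := n) fun x => neg_cube_add_cube_le (t x) (t (comp n x))
    have hl : expec n (fun x => -(t x ^ 3 + t (comp n x) ^ 3) / 6)
        = -1 / 3 * expec n (fun x => t x ^ 3) := by
      have h1 : (fun x => -(t x ^ 3 + t (comp n x) ^ 3) / 6)
          = fun x => -1 / 6 * (t x ^ 3 + t (comp n x) ^ 3) := by
        funext x; ring
      rw [h1, expec_const_mul, expec_add,
        expec_comp_involutive comp_involutive (fun x => t x ^ 3)]
      ring
    have hr : expec n (fun x => ((t x + t (comp n x)) / 2) ^ 2 / 6
          + 3 / 4 * (t x ^ 4 + t (comp n x) ^ 4))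
        = 1 / 6 * expec n (fun x => evenPart n t x ^ 2)
          + 3 / 2 * expec n (fun x => t x ^ 4) := by
      have h1 : (fun x => ((t x + t (comp n x)) / 2) ^ 2 / 6)
          = fun x => 1 / 6 * evenPart n t x ^ 2 := by
        funext x
        rw [evenPart]
        ring
      rw [expec_add, expec_const_mul, expec_add, h1, expec_const_mul,
        expec_comp_involutive comp_involutive (fun x => t x ^ 4)]
      ring
    rw [hl, hr] at h
    linarith
  have h := expec_mono (n := n) fun x => one_add_mul_log_le (ht x)
  have hr : (fun x => t x + t x ^ 2 / 2 - t x ^ 3 / 6 + t x ^ 4 / 3)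
      = fun x => t x + (1 / 2 * t x ^ 2 + (-1 / 6 * t x ^ 3 + 1 / 3 * t x ^ 4)) := by
    funext x; ring
  rw [hr, expec_add, expec_add, expec_add, expec_const_mul, expec_const_mul,
    expec_const_mul, h0] at h
  linarith

theorem expec_one_add_mul_log_le_crude {t : (Fin n → Bool) → ℝ} (ht : ∀ x, 0 ≤ 1 + t x)
    (h0 : expec n t = 0) :
    expec n (fun x => (1 + t x) * Real.log (1 + t x)) ≤ expec n (fun x => t x ^ 2) := by
  have h := expec_mono (n := n) fun x => one_add_mul_log_le_crude (ht x)
  rwa [expec_add, h0, zero_add] at h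

theorem sum_nonempty_pow_card_mul_le {r : ℝ} (h0 : 0 ≤ r) (h1 : r ≤ 1)
    {d : Finset (Fin n) → ℝ} (hd : ∀ S, 0 ≤ d S) :
    ∑ S ∈ univ.erase (∅ : Finset (Fin n)), r ^ S.card * d S ≤ r * ∑ S, d S := by
  rw [Finset.mul_sum]
  refine (Finset.sum_le_sum fun S hS => ?_).trans
    (Finset.sum_le_sum_of_subset_of_nonneg (Finset.erase_subset _ _)
      fun S _ _ => mul_nonneg h0 (hd S))
  have hS' : S.card ≠ 0 := by simpa using hS
  exact mul_le_mul_of_nonneg_right (pow_le_of_le_one h0 h1 hS') (hd S)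

theorem sum_nonempty_pow_card_mul_le_level_one {r : ℝ} (h0 : 0 ≤ r) (h1 : r ≤ 1)
    {d : Finset (Fin n) → ℝ} (hd : ∀ S, 0 ≤ d S) :
    ∑ S ∈ univ.erase (∅ : Finset (Fin n)), r ^ S.card * d S
      ≤ r * ∑ k : Fin n, d {k} + r ^ 2 * ∑ S, d S := by
  have hpt : ∀ S ∈ univ.erase (∅ : Finset (Fin n)),
      r ^ S.card * d S ≤ (if S.card = 1 then r * d S else 0) + r ^ 2 * d S := by
    intro S hS
    have hS' : S.card ≠ 0 := by simpa using hS
    split_ifs with h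
    · rw [h, pow_one]
      exact le_add_of_nonneg_right (mul_nonneg (by positivity) (hd S))
    · rw [zero_add]
      exact mul_le_mul_of_nonneg_right (pow_le_pow_of_le_one h0 h1 (by omega)) (hd S)
  have hlevel : ∑ S : Finset (Fin n), (if S.card = 1 then r * d S else 0)
      = r * ∑ k : Fin n, d {k} := by
    rw [← Finset.sum_filter, Finset.mul_sum]
    symm
    refine Finset.sum_bij (fun k _ => {k}) (by simp) (by simp) ?_ (by simp)
    intro S hS
    obtain ⟨k, rfl⟩ := Finset.card_eq_one.1 (Finset.mem_filter.1 hS).2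
    exact ⟨k, by simp, rfl⟩
  refine (Finset.sum_le_sum hpt).trans ((Finset.sum_le_sum_of_subset_of_nonneg
    (Finset.erase_subset _ _) fun S _ _ => ?_).trans (le_of_eq ?_))
  · have := hd S
    split_ifs <;> positivity
  · rw [Finset.sum_add_distrib, hlevel, ← Finset.mul_sum]

theorem evenPart_walsh_sum (s : Finset (Finset (Fin n))) (c : Finset (Fin n) → ℝ)
    (x : Fin n → Bool) :
    evenPart n (fun x => ∑ S ∈ s, c S * walsh n S x) x
      = ∑ S ∈ s, (if Even S.card then c S else 0) * walsh n S x := by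
  rw [evenPart, ← Finset.sum_add_distrib, Finset.sum_div]
  refine Finset.sum_congr rfl fun S _ => ?_
  rw [walsh_comp]
  split_ifs with h
  · rw [h.neg_one_pow]
    ring
  · rw [(Nat.not_even_iff_odd.1 h).neg_one_pow]
    ring

theorem expec_mul_log_noiseOp_le {ε : ℝ} (h0 : 0 ≤ ε) (h1 : ε ≤ 1 / 2)
    {f : (Fin n → Bool) → ℝ} (hf : ∀ x, 0 ≤ f x) (hE : expec n f = 1) :
    expec n (fun x => noiseOp n ε f x * Real.log (noiseOp n ε f x))
      ≤ 1 / 2 * (∑ k : Fin n, fcoef n f {k} ^ 2) * (1 - 2 * ε) ^ 2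
        + 11 * expec n (fun x => f x ^ 2) ^ 2 * ((1 - 2 * ε) ^ 2) ^ 2 := by
  set A := expec n (fun x => f x ^ 2) with hA
  set W := ∑ k : Fin n, fcoef n f {k} ^ 2 with hW
  set r := (1 - 2 * ε) ^ 2 with hr
  have hr0 : 0 ≤ r := sq_nonneg _
  have hr1 : r ≤ 1 := by rw [hr]; nlinarith
  have hW0 : 0 ≤ W := Finset.sum_nonneg fun k _ => sq_nonneg _
  have hParseval : ∑ S : Finset (Fin n), fcoef n f S ^ 2 = A := sum_fcoef_sq f
  have hA1 : 1 ≤ A := by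
    rw [← hParseval]
    refine le_trans ?_ (Finset.single_le_sum (f := fun S => fcoef n f S ^ 2)
      (fun S _ => sq_nonneg _) (Finset.mem_univ ∅))
    simp [fcoef_empty, hE]
  set c : Finset (Fin n) → ℝ := fun S => (1 - 2 * ε) ^ S.card * fcoef n f S with hc
  have hc2 : ∀ S, c S ^ 2 = r ^ S.card * fcoef n f S ^ 2 := by
    intro S
    simp only [hc, hr, mul_pow, ← pow_mul, mul_comm 2]
  set t : (Fin n → Bool) → ℝ := fun x => ∑ S ∈ univ.erase ∅, c S * walsh n S x with ht
  have hT : ∀ x, noiseOp n ε f x = 1 + t x := by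
    intro x
    rw [noiseOp_eq_walsh_sum, ← Finset.add_sum_erase _ _ (Finset.mem_univ ∅)]
    simp [ht, hc, fcoef_empty, hE, walsh]
  have htpos : ∀ x, 0 ≤ 1 + t x := fun x => hT x ▸ noiseOp_nonneg h0 h1 hf x
  have htmean : expec n t = 0 := by
    rw [ht, expec_sum]
    refine Finset.sum_eq_zero fun S hS => ?_
    have hS' : S ≠ ∅ := Finset.ne_of_mem_erase hS
    have h := expec_walsh_mul_walsh S ∅
    rw [if_neg hS'] at h
    have hempty : ∀ x, walsh n (∅ : Finset (Fin n)) x = 1 := fun x => Finset.prod_empty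
    simp only [hempty, mul_one] at h
    rw [expec_const_mul, h, mul_zero]
  have ht2 : expec n (fun x => t x ^ 2)
      = ∑ S ∈ univ.erase (∅ : Finset (Fin n)), r ^ S.card * fcoef n f S ^ 2 := by
    rw [ht, expec_sq_walsh_sum]
    exact Finset.sum_congr rfl fun S _ => hc2 S
  simp only [hT]
  rcases le_total r (1 / 3) with hsmall | hlarge
  · have hsq : expec n (fun x => t x ^ 2) ≤ r * W + r ^ 2 * A := by
      rw [ht2, ← hParseval]
      exact sum_nonempty_pow_card_mul_le_level_one hr0 hr1 fun S => sq_nonneg _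
    have heven : expec n (fun x => evenPart n t x ^ 2) ≤ r ^ 2 * A := by
      simp only [ht, evenPart_walsh_sum]
      rw [expec_sq_walsh_sum, ← hParseval, Finset.mul_sum]
      refine (Finset.sum_le_sum fun S hS => ?_).trans
        (Finset.sum_le_sum_of_subset_of_nonneg (Finset.erase_subset _ _)
          fun S _ _ => by positivity)
      have hS' : S.card ≠ 0 := by simpa using hS
      split_ifs with h
      · rw [hc2]
        refine mul_le_mul_of_nonneg_right (pow_le_pow_of_le_one hr0 hr1 ?_) (sq_nonneg _)
        obtain ⟨m, hm⟩ := h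
        omega
      · rw [zero_pow two_ne_zero]
        positivity
    have hfour : expec n (fun x => t x ^ 4) ≤ 9 * r ^ 2 * A ^ 2 := by
      have h := expec_pow_four_walsh_sum_le univ fun S => if S = ∅ then 0 else c S
      have hl : ∀ x, ∑ S ∈ univ.powerset, (if S = ∅ then 0 else c S) * walsh n S x = t x := by
        intro x
        rw [Finset.powerset_univ, ← Finset.add_sum_erase _ _ (Finset.mem_univ ∅), if_pos rfl,
          zero_mul, zero_add]
        exact Finset.sum_congr rfl fun S hS => by rw [if_neg (Finset.ne_of_mem_erase hS)]
      have hw : ∑ S ∈ (univ : Finset (Fin n)).powerset,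
            3 ^ S.card * (if S = ∅ then 0 else c S) ^ 2 ≤ 3 * r * A := by
        rw [Finset.powerset_univ, ← Finset.add_sum_erase _ _ (Finset.mem_univ ∅), if_pos rfl,
          zero_pow two_ne_zero, mul_zero, zero_add, ← hParseval]
        refine le_trans (le_of_eq (Finset.sum_congr rfl fun S hS => ?_))
          (sum_nonempty_pow_card_mul_le (by positivity) (by linarith) fun S => sq_nonneg _)
        rw [if_neg (Finset.ne_of_mem_erase hS), hc2, mul_pow]
        ring
      simp only [hl] at h
      calc _ ≤ _ := h
        _ ≤ (3 * r * A) ^ 2 :=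
          pow_le_pow_left₀ (Finset.sum_nonneg fun S _ => by positivity) hw 2
        _ = _ := by ring
    have hAA : r ^ 2 * A ≤ r ^ 2 * A ^ 2 := by
      gcongr
      nlinarith
    have := expec_one_add_mul_log_le htpos htmean
    nlinarith [mul_nonneg (sq_nonneg r) (sq_nonneg A)]
  · have hsq : expec n (fun x => t x ^ 2) ≤ r * A := by
      rw [ht2, ← hParseval]
      exact sum_nonempty_pow_card_mul_le hr0 hr1 fun S => sq_nonneg _
    have h := expec_one_add_mul_log_le_crude htpos htmean
    have h3 : r * A ≤ 11 * A ^ 2 * r ^ 2 := by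
      have : 1 ≤ 11 * (r * A) := by nlinarith
      nlinarith [mul_nonneg hr0 (zero_le_one.trans hA1)]
    have : 0 ≤ 1 / 2 * W * r := by positivity
    linarith

theorem expec_noiseOp (ε : ℝ) (f : (Fin n → Bool) → ℝ) :
    expec n (noiseOp n ε f) = expec n f := by
  have h : noiseOp n ε f
      = fun x => ∑ S, (1 - 2 * ε) ^ S.card * fcoef n f S * (walsh n S x * walsh n ∅ x) := by
    funext x
    rw [noiseOp_eq_walsh_sum]
    simp [walsh]
  rw [h, expec_sum]
  simp [expec_const_mul, expec_walsh_mul_walsh, fcoef_empty]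

theorem entro_noiseOp_le_of_expec_eq_one {ε : ℝ} (h0 : 0 ≤ ε) (h1 : ε ≤ 1 / 2)
    {f : (Fin n → Bool) → ℝ} (hf : ∀ x, 0 ≤ f x) (hE : expec n f = 1) :
    entro n (noiseOp n ε f)
      ≤ 1 / (2 * Real.log 2) * (∑ k : Fin n, fcoef n f {k} ^ 2) * (1 - 2 * ε) ^ 2
        + 11 / Real.log 2 * expec n (fun x => f x ^ 2) ^ 2 * ((1 - 2 * ε) ^ 2) ^ 2 := by
  have hlog : 0 < Real.log 2 := Real.log_pos one_lt_two
  have hent : entro n (noiseOp n ε f)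
      = (1 / Real.log 2) * expec n (fun x => noiseOp n ε f x * Real.log (noiseOp n ε f x)) := by
    rw [entro, expec_noiseOp, hE, Real.logb_one, mul_zero, sub_zero, ← expec_const_mul]
    congr 1
    funext x
    rw [Real.logb]
    ring
  rw [hent]
  refine (mul_le_mul_of_nonneg_left (expec_mul_log_noiseOp_le h0 h1 hf hE)
    (by positivity)).trans (le_of_eq ?_)
  field_simp

end Main

theorem stmt_15 :
    ∃ C : ℝ, 0 < C ∧
      ∀ (n : ℕ) (ε : ℝ), 0 ≤ ε → ε ≤ 1/2 →
        ∀ f : (Fin n → Bool) → ℝ, (∀ x, 0 ≤ f x) → (∃ x, f x ≠ 0) →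
          entro n (noiseOp n ε f)
            ≤ (1 / expec n f) * (1 / (2 * Real.log 2)) * (∑ k : Fin n, fcoef n f {k} ^ 2)
                * ((1 - 2 * ε) ^ 2)
              + C * (expec n (fun x => f x ^ 2) / expec n f) * ((1 - 2 * ε) ^ 2) ^ ((4 : ℝ) / 3)
              + C * ((expec n (fun x => f x ^ 2)) ^ 2 / (expec n f) ^ 3) * ((1 - 2 * ε) ^ 2) ^ 2 := by
  have hlog : 0 < Real.log 2 := Real.log_pos one_lt_two
  refine ⟨11 / Real.log 2, by positivity, fun n ε h0 h1 f hf hne => ?_⟩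
  have hμ : 0 < expec n f := by
    obtain ⟨x, hx⟩ := hne
    exact div_pos (Finset.sum_pos' (fun y _ => hf y)
      ⟨x, Finset.mem_univ x, lt_of_le_of_ne (hf x) hx.symm⟩) (by positivity)
  have hA : 0 ≤ expec n (fun x => f x ^ 2) := expec_nonneg fun x => sq_nonneg _
  generalize hμdef : expec n f = μ at hμ ⊢
  have hnorm := entro_noiseOp_le_of_expec_eq_one (f := fun x => μ⁻¹ * f x) h0 h1
    (fun x => mul_nonneg (by positivity) (hf x))
    (by rw [expec_const_mul, hμdef, inv_mul_cancel₀ hμ.ne'])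
  simp only [noiseOp_const_mul, entro_const_mul (inv_ne_zero hμ.ne'), fcoef_const_mul, mul_pow,
    expec_const_mul, ← Finset.mul_sum] at hnorm
  have hscaled := mul_le_mul_of_nonneg_left hnorm hμ.le
  rw [mul_inv_cancel_left₀ hμ.ne'] at hscaled
  have hmid : 0 ≤ 11 / Real.log 2 * (expec n (fun x => f x ^ 2) / μ)
      * ((1 - 2 * ε) ^ 2) ^ ((4 : ℝ) / 3) := by positivity
  refine (hscaled.trans (le_of_eq ?_)).trans
    (add_le_add_left (le_add_of_nonneg_right hmid) _)
  field_simp
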